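/- For every n ≥ 7 with n ≡ 3 (mod 4), the alternating configuration of n pegs can be sorted in ⌈n/2⌉ Berge 3-moves: for n = 4i+3 ≥ 11, first move the triple at positions 4i, 4i+1, 4i+2 to positions −2, −1, 0, then sort the remaining 4i+2 pegs using the solution for n−1 ≡ 2 (mod 4) (which shifts the string three positions right and places white pegs left of black pegs), while the peg originally at position 4i+3 falls into its correct sorted place. Hence h(n,3) = ⌈n/2⌉ for n ≡ 3 (mod 4), n ≥ 7. -/

import Mathlib

/-- A board configuration has finite support: only finitely many positions hold pegs. -/
def FinSupp (c : ℤ → Option Bool) : Prop := {p : ℤ | (c p).isSome}.Finite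

/-- The disorder: number of pegs `p` such that it is NOT the case that the next peg
to the right of `p` exists and has the same color. -/
noncomputable def disorder (c : ℤ → Option Bool) : ℕ :=
  Set.ncard {p : ℤ | (c p).isSome ∧
    ¬ ∃ q : ℤ, p < q ∧ c q = c p ∧ ∀ r : ℤ, p < r → r < q → c r = none}

/-- A Berge `k`-move taking the `k` pegs at positions `i, i+1, ..., i+k-1` to the
`k` vacant positions `j, j+1, ..., j+k-1`, preserving order. -/
def MoveTo (k : ℕ) (i j : ℤ) (c c' : ℤ → Option Bool) : Prop :=
  (j + k ≤ i ∨ i + k ≤ j) ∧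
  (∀ t : ℤ, 0 ≤ t → t < k → (c (i + t)).isSome ∧ c (j + t) = none) ∧
  c' = fun p => if j ≤ p ∧ p < j + k then c (i + (p - j))
    else if i ≤ p ∧ p < i + k then none else c p

/-- A Berge `k`-move from some source to some destination. -/
def BergeMove (k : ℕ) (c c' : ℤ → Option Bool) : Prop :=
  ∃ i j : ℤ, MoveTo k i j c c'

/-- The alternating configuration of `n` pegs: pegs at positions `1,...,n`,
white (`true`) at odd positions and black (`false`) at even positions. -/
def altConfig (n : ℕ) : ℤ → Option Bool :=
  fun p => if 1 ≤ p ∧ p ≤ (n : ℤ) then some (decide (p % 2 = 1)) else none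

/-- A sorted configuration of `n` pegs: a contiguous block of `n` pegs, the first
`⌈n/2⌉` of one color, followed by the remaining `⌊n/2⌋` of the other color. -/
def IsSorted (n : ℕ) (c : ℤ → Option Bool) : Prop :=
  ∃ j : ℤ, ∃ w : Bool,
    (∀ p : ℤ, (c p).isSome ↔ (j ≤ p ∧ p < j + (n : ℤ))) ∧
    (∀ p : ℤ, j ≤ p → p < j + (((n + 1) / 2 : ℕ) : ℤ) → c p = some w) ∧
    (∀ p : ℤ, j + (((n + 1) / 2 : ℕ) : ℤ) ≤ p → p < j + (n : ℤ) → c p = some (!w))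

/-- The alternating configuration of `n` pegs can be sorted in `m` Berge `k`-moves. -/
def SortsIn (k n m : ℕ) : Prop :=
  ∃ f : ℕ → (ℤ → Option Bool), f 0 = altConfig n ∧
    (∀ i < m, BergeMove k (f i) (f (i + 1))) ∧ IsSorted n (f m)

/-!
Count *bonds*: positions `p` such that `p` and `p + 1` carry pegs of the same color. The
alternating configuration has none, a sorted one has at least `n - 2`. A move creates bonds only
at the two ends of its destination, so it gains at most two; the first move gains at most one,
since one end of its destination is free. This gives `n ≤ 2m + 1` for a solution in `m` moves. In
the case of equality the first move gains exactly one bond and every later move is *tight*: it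
gains exactly two and destroys none. By symmetry the first move goes left; it then lands on
`-2, -1, 0` and leaves a triple hole somewhere in `-2, ..., n`, which every later tight move must
fill exactly. Painting the hole with the common color of its two neighbors, one finds that the run
lengths to the right of `-2` follow a pattern (`Locked`) which all tight moves preserve and which
keeps `-2` and `-1` of different colors. A tight move of an end triple fills the hole for good,
and the resulting contiguous block is not sorted.

For the upper bound, three moves produce a run of whites followed by a triple hole and, halfway
along the row, a run of blacks. From then on triples `W W B` moving left and `B B W` moving right
alternate, and each pair of moves lengthens both runs by two.
-/

/-- The mirror image of a configuration under `p ↦ s - p`, which keeps the colors of the pegs. -/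
def reflect (s : ℤ) (c : ℤ → Option Bool) : ℤ → Option Bool := fun p => c (s - p)

/-- The positions `p` such that `p` and `p + 1` carry pegs of the same color; their number measures
how close a configuration is to being sorted. -/
def bonds (c : ℤ → Option Bool) : Set ℤ := {p | (c p).isSome ∧ c p = c (p + 1)}

/-- The two places where a bond can join the window `i, ..., i + k - 1` to its surroundings. -/
def junctions (k : ℕ) (i : ℤ) : Set ℤ := {i - 1, i + k - 1}

theorem finite_junctions (k : ℕ) (i : ℤ) : (junctions k i).Finite :=
  Set.toFinite {i - 1, i + k - 1}

theorem ncard_junctions_le (k : ℕ) (i : ℤ) : (junctions k i).ncard ≤ 2 :=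
  (Set.ncard_insert_le _ _).trans (by simp)

/-- A Berge `k`-move whose moved pegs match the color of both their new neighbors and differ from
both their old ones (an old neighbor may be missing). -/
structure IsTightMove (k : ℕ) (i j : ℤ) (c c' : ℤ → Option Bool) : Prop where
  moveTo : MoveTo k i j c c'
  apart : i + k < j ∨ j + k < i
  left_fits : c (j - 1) = c i
  right_fits : c (i + k - 1) = c (j + k)
  left_breaks : c (i - 1) ≠ c i
  right_breaks : c (i + k - 1) ≠ c (i + k)

namespace MoveTo

variable {k : ℕ} {i j : ℤ} {c c' : ℤ → Option Bool}

theorem isSome_source (hm : MoveTo k i j c c') {p : ℤ} (h₁ : i ≤ p) (h₂ : p < i + k) :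
    (c p).isSome := by
  simpa using (hm.2.1 (p - i) (by omega) (by omega)).1

theorem dest_eq_none (hm : MoveTo k i j c c') {p : ℤ} (h₁ : j ≤ p) (h₂ : p < j + k) :
    c p = none := by
  simpa using (hm.2.1 (p - j) (by omega) (by omega)).2

theorem apply (hm : MoveTo k i j c c') (p : ℤ) :
    c' p = if j ≤ p ∧ p < j + k then c (i + (p - j))
      else if i ≤ p ∧ p < i + k then none else c p :=
  congrFun hm.2.2 p

theorem reflect (s : ℤ) (hm : MoveTo k i j c c') :
    MoveTo k (s + 1 - k - i) (s + 1 - k - j) (reflect s c) (reflect s c') := by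
  refine ⟨by have := hm.1; omega, fun t h₀ h₁ => ⟨?_, ?_⟩, funext fun p => ?_⟩
  · exact hm.isSome_source (by omega) (by omega)
  · exact hm.dest_eq_none (by omega) (by omega)
  · simp only [_root_.reflect, hm.apply]
    grind

theorem mem_bonds_of_mem_dest (hm : MoveTo k i j c c') {p : ℤ} (h₁ : j ≤ p)
    (h₂ : p + 1 < j + k) (hp : p ∈ bonds c') : i + (p - j) ∈ bonds c := by
  have := hm.apply p
  have := hm.apply (p + 1)
  grind [bonds]

theorem mem_bonds_of_outside_dest (hk : 1 ≤ k) (hm : MoveTo k i j c c') {p : ℤ}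
    (hj : p + 1 < j ∨ j + k ≤ p) (hp : p ∈ bonds c') :
    p ∈ bonds c ∧ (p + 1 < i ∨ i + k ≤ p) := by
  have := hm.apply p
  have := hm.apply (p + 1)
  grind [bonds]

theorem exists_mapsTo_injOn_bonds (hk : 1 ≤ k) (hm : MoveTo k i j c c') :
    ∃ g : ℤ → ℤ, Set.MapsTo g (bonds c' \ junctions k j) (bonds c \ junctions k i) ∧
      Set.InjOn g (bonds c' \ junctions k j) := by
  refine ⟨fun p => if j ≤ p ∧ p < j + k then i + (p - j) else p, ?_, ?_⟩
  · rintro p ⟨hp, hpj⟩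
    have := hm.mem_bonds_of_mem_dest (p := p)
    have := hm.mem_bonds_of_outside_dest hk (p := p)
    grind [junctions]
  · rintro p ⟨hp, hpj⟩ q ⟨hq, hqj⟩ hpq
    have := hm.mem_bonds_of_outside_dest hk (p := p)
    have := hm.mem_bonds_of_outside_dest hk (p := q)
    grind [junctions]

theorem finite_bonds (hk : 1 ≤ k) (hm : MoveTo k i j c c') (hc : (bonds c).Finite) :
    (bonds c').Finite := by
  obtain ⟨g, hg, hinj⟩ := hm.exists_mapsTo_injOn_bonds hk
  exact .of_sdiff (.of_injOn hg hinj hc.sdiff) (finite_junctions k j)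

theorem ncard_bonds_add_le (hk : 1 ≤ k) (hm : MoveTo k i j c c') (hc : (bonds c).Finite) :
    (bonds c').ncard + (bonds c ∩ junctions k i).ncard ≤
      (bonds c).ncard + (bonds c' ∩ junctions k j).ncard := by
  obtain ⟨g, hg, hinj⟩ := hm.exists_mapsTo_injOn_bonds hk
  have := Set.ncard_le_ncard_of_injOn g hg hinj hc.sdiff
  have := Set.ncard_inter_add_ncard_sdiff_eq_ncard (bonds c) (junctions k i) hc
  have := Set.ncard_inter_add_ncard_sdiff_eq_ncard (bonds c') (junctions k j)
    (hm.finite_bonds hk hc)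
  omega

theorem bonds_subset_junctions (hk : 1 ≤ k) (hm : MoveTo k i j c c') (hc : bonds c = ∅) :
    bonds c' ⊆ junctions k j := by
  obtain ⟨g, hg, -⟩ := hm.exists_mapsTo_injOn_bonds hk
  by_contra h
  obtain ⟨p, hp, hpj⟩ := Set.not_subset.1 h
  simpa [hc] using hg ⟨hp, hpj⟩

theorem left_fits (hk : 1 ≤ k) (hm : MoveTo k i j c c') (h : j - 1 ∈ bonds c') :
    i + k ≠ j ∧ c (j - 1) = c i := by
  have := hm.1
  have := hm.apply (j - 1)
  have := hm.apply j
  grind [bonds]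

theorem right_fits (hk : 1 ≤ k) (hm : MoveTo k i j c c') (h : j + k - 1 ∈ bonds c') :
    j + k ≠ i ∧ c (i + k - 1) = c (j + k) := by
  have := hm.1
  have := hm.apply (j + k - 1)
  have := hm.apply (j + k)
  grind [bonds]

theorem ncard_bonds_le (hk : 1 ≤ k) (hm : MoveTo k i j c c') (hc : (bonds c).Finite) :
    (bonds c').ncard ≤ (bonds c).ncard + 2 := by
  have := hm.ncard_bonds_add_le hk hc
  have := (Set.ncard_inter_le_ncard_right (bonds c') _ (finite_junctions k j)).trans
    (ncard_junctions_le k j)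
  omega

theorem isTightMove (hk : 1 ≤ k) (hm : MoveTo k i j c c') (hc : (bonds c).Finite)
    (h : (bonds c').ncard = (bonds c).ncard + 2) : IsTightMove k i j c c' := by
  have hadd := hm.ncard_bonds_add_le hk hc
  have hJ := ncard_junctions_le k j
  have hsub : junctions k j ⊆ bonds c' := by
    refine Set.inter_eq_right.1 (Set.eq_of_subset_of_ncard_le Set.inter_subset_right ?_
      (finite_junctions k j))
    omega
  have hdisj : bonds c ∩ junctions k i = ∅ := by
    rw [← Set.ncard_eq_zero (hc.inter_of_left _)]
    rw [Set.inter_eq_right.2 hsub] at hadd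
    omega
  obtain ⟨hij, hl⟩ := hm.left_fits hk (hsub (Or.inl rfl))
  obtain ⟨hji, hr⟩ := hm.right_fits hk (hsub (Or.inr rfl))
  have h₁ : i - 1 ∉ bonds c := fun h => hdisj.subset ⟨h, Or.inl rfl⟩
  have h₂ : i + k - 1 ∉ bonds c := fun h => hdisj.subset ⟨h, Or.inr rfl⟩
  have h₃ := hm.isSome_source (p := i) (by omega) (by omega)
  have h₄ := hm.isSome_source (p := i + k - 1) (by omega) (by omega)
  exact ⟨hm, by have := hm.1; omega, hl, hr, by grind [bonds], by grind [bonds]⟩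

end MoveTo

/-- The color of position `p` in every alternating configuration, extended to all of `ℤ`. -/
def altColor (p : ℤ) : Bool := decide (p % 2 = 1)

theorem reflect_altConfig {n : ℕ} (hn : n % 2 = 1) :
    reflect (n + 1) (altConfig n) = altConfig n := by
  funext p
  have : ((n : ℤ) + 1 - p) % 2 = 1 ↔ p % 2 = 1 := by omega
  simp only [reflect, altConfig, this]
  grind

theorem bonds_altConfig (n : ℕ) : bonds (altConfig n) = ∅ := by
  refine Set.eq_empty_of_forall_notMem fun p hp => ?_
  have : (p + 1) % 2 = 1 ↔ ¬p % 2 = 1 := by omega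
  grind [bonds, altConfig]

/-- The contiguous block of `n` pegs starting at `lo` whose first `s` pegs have color `w` and whose
others have color `!w`. Unlike `IsSorted` it allows any `s`, as mirroring a sorted block of odd
length exchanges `⌈n/2⌉` and `⌊n/2⌋`. -/
def splitBlock (n lo s : ℤ) (w : Bool) : ℤ → Option Bool := fun p =>
  if lo ≤ p ∧ p < lo + s then some w else if lo + s ≤ p ∧ p < lo + n then some (!w) else none

theorem isSorted_iff {n : ℕ} {c : ℤ → Option Bool} :
    IsSorted n c ↔ ∃ lo w, c = splitBlock n lo ((n + 1) / 2 : ℕ) w := by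
  refine exists_congr fun lo => exists_congr fun w => ⟨?_, ?_⟩
  · rintro ⟨hsupp, hw, hb⟩
    funext p
    by_cases hp : lo ≤ p ∧ p < lo + n
    · grind [splitBlock]
    · have := Option.not_isSome_iff_eq_none.1 (mt (hsupp p).1 hp)
      grind [splitBlock]
  · rintro rfl
    grind [splitBlock]

theorem reflect_splitBlock (n : ℕ) (lo s : ℤ) (w : Bool) :
    reflect (n + 1) (splitBlock n lo s w) = splitBlock n (2 - lo) (n - s) (!w) := by
  funext p
  simp only [reflect, splitBlock]
  grind

theorem le_ncard_bonds_splitBlock {n lo s : ℤ} {w : Bool} :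
    n - 2 ≤ (bonds (splitBlock n lo s w)).ncard := by
  have hsub : (((Finset.Ico lo (lo + n - 1)).erase (lo + s - 1) : Finset ℤ) : Set ℤ) ⊆
      bonds (splitBlock n lo s w) := by
    intro p hp
    grind [splitBlock, bonds]
  have hfin : (bonds (splitBlock n lo s w)).Finite :=
    ((Set.finite_Ico lo (lo + s)).union (Set.finite_Ico (lo + s) (lo + n))).subset fun p hp => by
      grind [splitBlock, bonds]
  have hle := Set.ncard_le_ncard hsub hfin
  have := Finset.pred_card_le_card_erase (s := Finset.Ico lo (lo + n - 1)) (a := lo + s - 1)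
  rw [Set.ncard_coe_finset] at hle
  rw [Int.card_Ico] at this
  omega

section FirstMove

variable {k n : ℕ} {i j : ℤ} {c c' : ℤ → Option Bool}

theorem MoveTo.outside_altConfig (hk : 1 ≤ k) (hm : MoveTo k i j (altConfig n) c') :
    j + k ≤ 1 ∨ n < j := by
  have h₁ := hm.isSome_source (p := i) (by omega) (by omega)
  have h₂ := hm.dest_eq_none (p := max 1 j)
  grind [altConfig]

theorem MoveTo.bonds_subset_of_left (hk : 1 ≤ k) (hm : MoveTo k i j (altConfig n) c')
    (hj : j + k ≤ 1) : bonds c' ⊆ {j + k - 1} := by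
  intro p hp
  have := hm.bonds_subset_junctions hk (bonds_altConfig n) hp
  have := hm.apply (j - 1)
  grind [junctions, bonds, altConfig]

theorem MoveTo.bonds_subset_of_right (hk : 1 ≤ k) (hm : MoveTo k i j (altConfig n) c')
    (hj : n < j) : bonds c' ⊆ {j - 1} := by
  intro p hp
  have := hm.bonds_subset_junctions hk (bonds_altConfig n) hp
  have := hm.apply (j + k)
  grind [junctions, bonds, altConfig]

theorem MoveTo.ncard_bonds_le_one (hk : 1 ≤ k) (hm : MoveTo k i j (altConfig n) c') :
    (bonds c').ncard ≤ 1 := by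
  obtain ⟨p, hp⟩ : ∃ p, bonds c' ⊆ {p} := (hm.outside_altConfig hk).elim
    (fun hj => ⟨_, hm.bonds_subset_of_left hk hj⟩) (fun hj => ⟨_, hm.bonds_subset_of_right hk hj⟩)
  simpa using Set.ncard_le_ncard hp

variable {m : ℕ} {f : ℕ → ℤ → Option Bool}

theorem finite_bonds_of_moves (hk : 1 ≤ k) (h₀ : f 0 = altConfig n)
    (hf : ∀ t < m, BergeMove k (f t) (f (t + 1))) : ∀ t ≤ m, (bonds (f t)).Finite := by
  intro t ht
  induction t with
  | zero => simp [h₀, bonds_altConfig]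
  | succ t ih =>
    obtain ⟨i, j, hm⟩ := hf t ht
    exact hm.finite_bonds hk (ih (by omega))

theorem ncard_bonds_le_of_moves (hk : 1 ≤ k) (h₀ : f 0 = altConfig n)
    (hf : ∀ t < m, BergeMove k (f t) (f (t + 1))) :
    ∀ t < m, (bonds (f (t + 1))).ncard ≤ 2 * t + 1 := by
  intro t ht
  obtain ⟨i, j, hm⟩ := hf t ht
  induction t generalizing i j with
  | zero => exact (h₀ ▸ hm).ncard_bonds_le_one hk
  | succ t ih =>
    obtain ⟨i', j', hm'⟩ := hf t (by omega)
    have := hm.ncard_bonds_le hk (finite_bonds_of_moves hk h₀ hf _ (by omega))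
    have := ih (by omega) i' j' hm'
    omega

theorem SortsIn.le_two_mul_add_one (hk : 1 ≤ k) (hn : 3 ≤ n) (h : SortsIn k n m) :
    n ≤ 2 * m + 1 := by
  obtain ⟨f, h₀, hf, hs⟩ := h
  obtain ⟨lo, w, hfm⟩ := isSorted_iff.1 hs
  have hge := hfm ▸ le_ncard_bonds_splitBlock
  cases m with
  | zero =>
    simp only [h₀, bonds_altConfig, Set.ncard_empty] at hge
    omega
  | succ m =>
    have := ncard_bonds_le_of_moves hk h₀ hf m (by omega)
    omega

end FirstMove

/-- The obstruction preserved by tight moves, for a coloring `d` of the line with a painted hole at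
`h, h + 1, h + 2`: the color changes at `q`, and from `q` on come runs of length two, followed by
either a run of length one and then a longer one, or a run of length at least four. Such a long run
must not have its hole at its third site, where filling in a triple `x y x` would leave a run of
length three. -/
inductive Locked (d : ℤ → Bool) (h : ℤ) : ℤ → Prop
  | single {q} : d (q - 1) ≠ d q → d q ≠ d (q + 1) → d (q + 1) = d (q + 2) → Locked d h q
  | long {q} : d (q - 1) ≠ d q → d q = d (q + 1) → d (q + 1) = d (q + 2) → d (q + 2) = d (q + 3) →
      h ≠ q + 2 → Locked d h q
  | pair {q} : d (q - 1) ≠ d q → d q = d (q + 1) → Locked d h (q + 2) → Locked d h q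

/-- The coloring after the triple at `i` has moved to `j`, where the hole it leaves behind is
painted in the color of its left neighbor. -/
def refill (d : ℤ → Bool) (i j p : ℤ) : Bool :=
  if j ≤ p ∧ p < j + 3 then d (i + (p - j)) else if i ≤ p ∧ p < i + 3 then d (i - 1) else d p

/-- The triple hole at `h` is painted in the color of its left neighbor, which is also that of its
right neighbor. -/
def FlatAt (d : ℤ → Bool) (h : ℤ) : Prop :=
  ∀ p, h ≤ p → p ≤ h + 3 → d p = d (h - 1)

/-- `IsTightMove` in terms of a coloring: the triple at `i`, flanked by pegs on both sides, tightly
fills a flat hole at `h`. -/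
structure IsTightTriple (d : ℤ → Bool) (i h : ℤ) : Prop where
  disjoint : i + 3 < h ∨ h + 3 < i
  fits : d i = d (h - 1)
  ends_eq : d i = d (i + 2)
  left_ne : d (i - 1) ≠ d i
  right_ne : d (i + 2) ≠ d (i + 3)

section Locked

variable {d : ℤ → Bool} {h i q : ℤ}

theorem Locked.ne (H : Locked d h q) : d (q - 1) ≠ d q := by
  cases H <;> assumption

theorem IsTightTriple.flatAt_refill (ht : IsTightTriple d i h) : FlatAt (refill d i h) i := by
  obtain ⟨h₁, -, h₂, h₃, h₄⟩ := ht
  have hcol : d (i + 3) = d (i - 1) := by rw [Bool.eq_not.2 h₃, Bool.eq_not.2 h₄.symm, h₂]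
  intro p hp hp'
  grind [refill]

theorem Locked.refill (H : Locked d h q) (hq : q < h) (hi : q ≤ i) (hd : FlatAt d h)
    (ht : IsTightTriple d i h) : q < i ∧ Locked (refill d i h) i q := by
  obtain ⟨hdisj, hfit, hends, hleft, hright⟩ := ht
  unfold FlatAt at hd
  induction H with
  | @single q h₁ h₂ h₃ =>
    have hiq : i ≠ q := by
      rintro rfl
      exact h₂ (hends.trans h₃.symm)
    have hhq : h ≠ q + 1 := by grind
    refine ⟨by omega, ?_⟩
    obtain rfl | hi' := eq_or_ne i (q + 1)
    · apply Locked.long <;> grind [_root_.refill]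
    · apply Locked.single <;> grind [_root_.refill]
  | @long q h₁ h₂ h₃ h₄ hh =>
    have hiq : i ≠ q := by
      rintro rfl
      exact hright h₄
    refine ⟨by omega, ?_⟩
    -- A triple `x y x` filling in behind `q = x` makes `x x y` out of the long run.
    by_cases hi' : h = q + 1 ∧ d (i + 1) ≠ d i
    · have h' : Locked (_root_.refill d i h) i (q + 2) := by
        apply Locked.single <;> grind [_root_.refill]
      exact .pair (by grind [_root_.refill]) (by grind [_root_.refill]) h'
    · apply Locked.long <;> grind [_root_.refill]
  | @pair q h₁ h₂ H ih =>
    have h₃ : d (q + 1) ≠ d (q + 2) := by grind [H.ne]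
    have hiq : i ≠ q := by
      rintro rfl
      exact h₃ (h₂.symm.trans hends)
    have hiq' : i ≠ q + 1 := by grind
    have hhq : q + 2 < h := by grind [H.ne]
    obtain ⟨-, H'⟩ := ih hhq (by omega)
    exact ⟨by omega, .pair (by grind [_root_.refill]) (by grind [_root_.refill]) H'⟩

end Locked

section SplitBlock

variable {n lo s p : ℤ} {w x y : Bool} {c : ℤ → Option Bool}

theorem ne_splitBlock_of_zigzag (hxy : x ≠ y) (h₀ : c p = some x) (h₁ : c (p + 1) = some y)
    (h₂ : c (p + 2) = some x) : c ≠ splitBlock n lo s w := by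
  rintro rfl
  grind [splitBlock]

theorem ne_splitBlock_of_first (hs : 2 ≤ s) (hxy : x ≠ y) (h₀ : c (p - 1) = none)
    (h₁ : c p = some x) (h₂ : c (p + 1) = some y) : c ≠ splitBlock n lo s w := by
  rintro rfl
  grind [splitBlock]

theorem ne_splitBlock_of_gap (h₀ : (c (p - 1)).isSome) (h₁ : c p = none)
    (h₂ : (c (p + 3)).isSome) : c ≠ splitBlock n lo s w := by
  rintro rfl
  grind [splitBlock]

end SplitBlock

/-- The configuration on the positions `-2, ..., n` other than `h, h + 1, h + 2`, with colors
`d`. -/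
def holed (d : ℤ → Bool) (n h p : ℤ) : Option Bool :=
  if -2 ≤ p ∧ p ≤ n ∧ ¬(h ≤ p ∧ p ≤ h + 2) then some (d p) else none

/-- The configurations of `n` pegs met after a leftward opening, as long as all moves are tight:
either locked to the left of an interior hole, or a contiguous block which is not split into two
runs of length at least two. -/
inductive IsObstructed (n : ℤ) (c : ℤ → Option Bool) : Prop
  | hole {d h} : -1 < h → h + 2 < n → FlatAt d h → Locked d h (-1) → c = holed d n h →
      IsObstructed n c
  | block {lo} : (∀ p, (c p).isSome ↔ lo ≤ p ∧ p < lo + n) →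
      (∀ lo s w, 2 ≤ s → s + 2 ≤ n → c ≠ splitBlock n lo s w) → IsObstructed n c

section Obstructed

variable {n i j h p lo s : ℤ} {w : Bool} {d : ℤ → Bool} {c c' : ℤ → Option Bool}

theorem IsObstructed.ne_splitBlock (hc : IsObstructed n c) (hs : 2 ≤ s) (hsn : s + 2 ≤ n) :
    c ≠ splitBlock n lo s w := by
  obtain ⟨h₁, h₂, -, -, rfl⟩ | ⟨-, hc⟩ := hc
  · exact ne_splitBlock_of_gap (p := ‹ℤ›) (by grind [holed]) (by grind [holed]) (by grind [holed])
  · exact hc lo s w hs hsn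

theorem isObstructed_holed_last (hne : d (-2) ≠ d (-1)) :
    IsObstructed n (holed d n (n - 2)) :=
  .block (lo := -2) (by grind [holed]) fun _ _ _ hs _ =>
    ne_splitBlock_of_first (p := -2) hs hne (by grind [holed]) (by grind [holed]) (by grind [holed])

theorem isObstructed_holed_first (hp : 1 ≤ p) (hpn : p + 2 ≤ n) (hne : d p ≠ d (p + 1))
    (heq : d p = d (p + 2)) : IsObstructed n (holed d n (-2)) :=
  .block (lo := 1) (by grind [holed]) fun _ _ _ _ _ =>
    ne_splitBlock_of_zigzag (p := p) hne (by grind [holed]) (by grind [holed]) (by grind [holed])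

theorem IsTightMove.not_contiguous {k : ℕ} (hk : 1 ≤ k) (hm : IsTightMove k i j c c') :
    ¬∀ p, (c p).isSome ↔ lo ≤ p ∧ p < lo + n := by
  intro hc
  have h₁ := hm.moveTo.isSome_source (p := i) (by omega) (by omega)
  have h₂ := hm.moveTo.isSome_source (p := i + k - 1) (by omega) (by omega)
  rw [← hm.left_fits, hc] at h₁
  rw [hm.right_fits, hc] at h₂
  have h₃ := (hc j).2 (by omega)
  simp [hm.moveTo.dest_eq_none (p := j) (by omega) (by omega)] at h₃

theorem IsTightMove.isSome_neighbors (hm : IsTightMove 3 i j c c') :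
    (c (j - 1)).isSome ∧ (c (j + 3)).isSome := by
  have h₁ := hm.moveTo.isSome_source (p := i) (by omega) (by omega)
  have h₂ := hm.moveTo.isSome_source (p := i + 2) (by omega) (by omega)
  grind [hm.left_fits, hm.right_fits]

theorem IsTightMove.dest_eq_hole (hm : IsTightMove 3 i j (holed d n h) c') : j = h := by
  have h₁ := hm.moveTo.dest_eq_none (p := j) (by omega) (by omega)
  have h₂ := hm.moveTo.dest_eq_none (p := j + 2) (by omega) (by omega)
  have := hm.isSome_neighbors
  grind [holed]

theorem IsTightMove.source_mem_Icc (hm : IsTightMove 3 i j (holed d n h) c') :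
    i ∈ Set.Icc (-2) (n - 2) := by
  have h₁ := hm.moveTo.isSome_source (p := i) (by omega) (by omega)
  have h₂ := hm.moveTo.isSome_source (p := i + 2) (by omega) (by omega)
  grind [holed]

theorem IsTightMove.eq_holed_refill (hm : IsTightMove 3 i h (holed d n h) c') :
    c' = holed (refill d i h) n i := by
  funext p
  have := hm.apart
  have := hm.isSome_neighbors
  have := hm.source_mem_Icc
  rw [hm.moveTo.apply]
  grind [holed, refill]

theorem IsTightMove.color_eq (hm : IsTightMove 3 i h (holed d n h) c') (hd : FlatAt d h) :
    d i = d (h - 1) ∧ d i = d (i + 2) := by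
  have := hm.apart
  have := hm.isSome_neighbors
  have := hm.left_fits
  have := hm.right_fits
  have := hd (h + 3)
  grind [holed]

theorem IsTightMove.isTightTriple (hm : IsTightMove 3 i h (holed d n h) c') (hd : FlatAt d h)
    (hi : -2 < i) (hin : i + 2 < n) : IsTightTriple d i h := by
  have hdisj := hm.apart
  have := hm.left_breaks
  have := hm.right_breaks
  have := hm.isSome_neighbors
  refine ⟨hdisj, (hm.color_eq hd).1, (hm.color_eq hd).2, ?_, ?_⟩ <;> grind [holed]

theorem IsTightMove.isObstructed (hm : IsTightMove 3 i j c c') (hc : IsObstructed n c) :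
    IsObstructed n c' := by
  obtain ⟨h₁, h₂, hd, hL, rfl⟩ | ⟨hc, -⟩ := hc
  · obtain rfl := hm.dest_eq_hole
    obtain rfl := hm.eq_holed_refill
    have hne := hL.ne
    have := hm.apart
    have := hm.source_mem_Icc
    obtain rfl | hi := eq_or_ne i (-2)
    · have := hm.color_eq hd
      exact isObstructed_holed_first (p := j) (by omega) (by omega) (by grind [refill])
        (by grind [refill])
    obtain rfl | hin := eq_or_ne i (n - 2)
    · exact isObstructed_holed_last (by grind [refill])
    have ht := hm.isTightTriple hd (by grind) (by grind)
    obtain ⟨hi', hL'⟩ := hL.refill h₁ (by grind) hd ht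
    exact .hole hi' (by grind) ht.flatAt_refill hL' rfl
  · exact (hm.not_contiguous (by omega) hc).elim

theorem MoveTo.source_odd_of_bonds_nonempty {n : ℕ} (hm : MoveTo 3 i j (altConfig n) c')
    (hj : j + 3 ≤ 1) (hc : (bonds c').Nonempty) : j = -2 ∧ 3 ≤ i ∧ i + 2 ≤ n ∧ i % 2 = 1 := by
  obtain ⟨p, hp⟩ := hc
  obtain rfl : p = j + 2 := by
    have := hm.bonds_subset_of_left (by omega) hj hp
    grind
  have hfit := hm.right_fits (by omega) (by grind)
  have h₁ := hm.isSome_source (p := i) (by omega) (by omega)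
  have h₂ := hm.isSome_source (p := i + 2) (by omega) (by omega)
  obtain rfl : j = -2 := by grind [altConfig]
  have : altConfig n (i + 2) = altConfig n 1 := by grind
  simp only [altConfig] at this h₁ h₂
  grind

theorem MoveTo.isObstructed_altConfig {n : ℕ} (hm : MoveTo 3 i j (altConfig n) c')
    (hj : j + 3 ≤ 1) (hc : (bonds c').Nonempty) : IsObstructed n c' := by
  obtain ⟨rfl, hi, hin, hodd⟩ := hm.source_odd_of_bonds_nonempty hj hc
  have hmod : (i + 1) % 2 ≠ 1 ∧ (i + 2) % 2 = 1 ∧ (i + 3) % 2 ≠ 1 ∧ (i - 1) % 2 ≠ 1 := by omega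
  obtain rfl : c' = holed (refill altColor i (-2)) n i := by
    funext p
    rw [hm.apply]
    grind [altConfig, holed, refill, altColor]
  obtain rfl | hin' := eq_or_ne i (n - 2)
  · exact isObstructed_holed_last (by grind [refill, altColor])
  · refine .hole (by omega) (by omega) ?_ ?_ rfl
    · intro p _ _
      grind [refill, altColor]
    · apply Locked.single <;> grind [refill, altColor]

end Obstructed

theorem BergeMove.reflect {k : ℕ} {c c' : ℤ → Option Bool} (s : ℤ) (h : BergeMove k c c') :
    BergeMove k (reflect s c) (reflect s c') :=
  let ⟨_, _, hm⟩ := h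
  ⟨_, _, hm.reflect s⟩

section LowerBound

variable {n m : ℕ} {f : ℕ → ℤ → Option Bool}

theorem isObstructed_of_moves {i j : ℤ} (h₀ : f 0 = altConfig n)
    (hf : ∀ t < m, BergeMove 3 (f t) (f (t + 1))) (hm : MoveTo 3 i j (f 0) (f 1))
    (hj : j + 3 ≤ 1) :
    ∀ t < m, (bonds (f (t + 1))).ncard = 2 * t + 1 → IsObstructed n (f (t + 1)) := by
  intro t ht hcard
  induction t with
  | zero =>
    have hne : (bonds (f (0 + 1))).Nonempty := Set.nonempty_of_ncard_ne_zero (by omega)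
    exact (h₀ ▸ hm).isObstructed_altConfig hj hne
  | succ t ih =>
    obtain ⟨i', j', hm'⟩ := hf (t + 1) ht
    have hfin := finite_bonds_of_moves (by omega) h₀ hf (t + 1) (by omega)
    have := hm'.ncard_bonds_le (by omega) hfin
    have := ncard_bonds_le_of_moves (by omega) h₀ hf t (by omega)
    have htight := hm'.isTightMove (by omega) hfin (by omega)
    exact htight.isObstructed (ih (by omega) (by omega))

theorem ne_splitBlock_of_left_move {i j lo s : ℤ} {w : Bool}
    (h₀ : f 0 = altConfig (2 * m + 1)) (hf : ∀ t < m, BergeMove 3 (f t) (f (t + 1)))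
    (h₁ : MoveTo 3 i j (f 0) (f 1)) (hj : j + 3 ≤ 1) (hs : 2 ≤ s) (hsn : s + 1 ≤ 2 * m) :
    f m ≠ splitBlock (2 * m + 1) lo s w := by
  intro hfm
  have hge := hfm ▸ le_ncard_bonds_splitBlock
  obtain ⟨m, rfl⟩ := Nat.exists_eq_add_of_le' (by omega : 1 ≤ m)
  have hle := ncard_bonds_le_of_moves (by omega) h₀ hf m (by omega)
  have hobs := isObstructed_of_moves h₀ hf h₁ hj m (by omega) (by omega)
  exact hobs.ne_splitBlock hs (by omega) (by simpa using hfm)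

theorem not_sortsIn_three_two_mul_add_one (hm : 2 ≤ m) : ¬SortsIn 3 (2 * m + 1) m := by
  rintro ⟨f, h₀, hf, hs⟩
  obtain ⟨lo, w, hfm⟩ := isSorted_iff.1 hs
  rw [show (2 * m + 1 + 1) / 2 = m + 1 by omega] at hfm
  obtain ⟨i, j, h₁⟩ := hf 0 (by omega)
  obtain hj | hj := (h₀ ▸ h₁).outside_altConfig (by omega)
  · exact ne_splitBlock_of_left_move (s := m + 1) h₀ hf h₁ hj (by omega) (by omega)
      (by simpa using hfm)
  · refine ne_splitBlock_of_left_move (f := fun t => reflect ((2 * m + 1 : ℕ) + 1) (f t))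
      ?_ (fun t ht => (hf t ht).reflect _) (h₁.reflect _) (by omega) (s := m) (lo := 2 - lo)
      (w := !w) (by omega) (by omega) ?_
    · rw [h₀, reflect_altConfig (by omega)]
    · rw [hfm, reflect_splitBlock]
      congr 1
      push_cast
      ring

theorem SortsIn.half_le (hn : 5 ≤ n) (h : SortsIn 3 n m) : (n + 1) / 2 ≤ m := by
  by_contra hlt
  have := h.le_two_mul_add_one (by omega) (by omega)
  obtain rfl : n = 2 * m + 1 := by omega
  exact not_sortsIn_three_two_mul_add_one (by omega) h

end LowerBound

/-- `c'` is reached from `c` in `m` Berge `k`-moves. -/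
inductive MovesIn (k : ℕ) (c : ℤ → Option Bool) : ℕ → (ℤ → Option Bool) → Prop
  | refl : MovesIn k c 0 c
  | snoc {m c' c''} : MovesIn k c m c' → BergeMove k c' c'' → MovesIn k c (m + 1) c''

theorem MovesIn.exists_seq {k m : ℕ} {c c' : ℤ → Option Bool} (h : MovesIn k c m c') :
    ∃ f : ℕ → ℤ → Option Bool, f 0 = c ∧ (∀ t < m, BergeMove k (f t) (f (t + 1))) ∧ f m = c' := by
  induction h with
  | refl => exact ⟨fun _ => c, rfl, by simp, rfl⟩
  | @snoc m c' c'' _ hc ih =>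
    obtain ⟨f, h₀, hf, rfl⟩ := ih
    refine ⟨fun t => if t ≤ m then f t else c'', by simpa, fun t ht => ?_, by simp⟩
    obtain rfl | ht := (Nat.lt_succ_iff.1 ht).eq_or_lt
    · simpa
    · simpa [ht.le, Nat.succ_le_iff.2 ht] using hf t ht

/-- The configuration reached from `altConfig (4 * i + 3)` by moving `2, 3, 4` to the right end. -/
def firstStage (i p : ℤ) : Option Bool :=
  if p = 1 ∨ 5 ≤ p ∧ p ≤ 4 * i + 6 then some (altColor p) else none

/-- The configuration reached from `firstStage i` by moving `2 * i + 5, ...` to `2, 3, 4`. -/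
def secondStage (i p : ℤ) : Option Bool :=
  if 1 ≤ p ∧ p ≤ 2 ∨ p = 4 then some true
  else if p = 3 then some false
  else if 5 ≤ p ∧ p ≤ 2 * i + 4 ∨ 2 * i + 8 ≤ p ∧ p ≤ 4 * i + 6 then some (altColor p)
  else none

/-- The configuration after `2 * j + 3` moves of the solution for `4 * i + 3` pegs: `2 * j + 2`
whites, the hole, what is left of the first alternating half, `2 * j + 1` blacks, one white, and
the rest of the second alternating half. -/
def leftGap (i j p : ℤ) : Option Bool :=
  if 1 ≤ p ∧ p ≤ 2 * j + 2 then some true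
  else if 2 * i + 5 ≤ p ∧ p ≤ 2 * i + 2 * j + 5 then some false
  else if p = 2 * i + 2 * j + 6 then some true
  else if 2 * j + 6 ≤ p ∧ p ≤ 4 * i + 6 then some (altColor p)
  else none

/-- The configuration reached from `leftGap i j` by moving the triple `W W B` behind the
`2 * j + 1` blacks into the hole; for `j = i - 1` it is sorted. -/
def rightGap (i j p : ℤ) : Option Bool :=
  if 1 ≤ p ∧ p ≤ 2 * j + 4 then some true
  else if p = 2 * j + 5 then some false
  else if 2 * i + 5 ≤ p ∧ p ≤ 2 * i + 2 * j + 5 then some false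
  else if 2 * j + 6 ≤ p ∧ p ≤ 2 * i + 4 ∨ 2 * i + 2 * j + 9 ≤ p ∧ p ≤ 4 * i + 6 then
    some (altColor p)
  else none

section UpperBound

variable {i j : ℕ}

theorem bergeMove_altConfig_firstStage (hi : 1 ≤ i) :
    BergeMove 3 (altConfig (4 * i + 3)) (firstStage i) := by
  refine ⟨2, 4 * i + 4, by omega, fun t _ _ => ⟨?_, ?_⟩, funext fun p => ?_⟩
  · grind [altConfig]
  · grind [altConfig]
  · have : (2 + (p - (4 * i + 4))) % 2 = 1 ↔ p % 2 = 1 := by omega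
    grind [altConfig, firstStage, altColor]

theorem bergeMove_firstStage_secondStage (hi : 1 ≤ i) :
    BergeMove 3 (firstStage i) (secondStage i) := by
  refine ⟨2 * i + 5, 2, by omega, fun t _ _ => ⟨?_, ?_⟩, funext fun p => ?_⟩
  · grind [firstStage]
  · grind [firstStage]
  · have : (2 * i + 5 + (p - 2)) % 2 = 1 ↔ p % 2 ≠ 1 := by omega
    grind [secondStage, firstStage, altColor]

theorem bergeMove_secondStage_leftGap (hi : 1 ≤ i) :
    BergeMove 3 (secondStage i) (leftGap i 0) := by
  refine ⟨3, 2 * i + 5, by omega, fun t _ _ => ⟨?_, ?_⟩, funext fun p => ?_⟩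
  · grind [secondStage]
  · grind [secondStage]
  · grind [secondStage, leftGap, altColor]

theorem bergeMove_leftGap_rightGap (hj : j < i) :
    BergeMove 3 (leftGap i j) (rightGap i j) := by
  refine ⟨2 * i + 2 * j + 6, 2 * j + 3, by omega, fun t _ _ => ⟨?_, ?_⟩, funext fun p => ?_⟩
  · grind [leftGap]
  · grind [leftGap]
  · grind [leftGap, rightGap, altColor]

theorem bergeMove_rightGap_leftGap (hj : j + 1 < i) :
    BergeMove 3 (rightGap i j) (leftGap i (j + 1)) := by
  refine ⟨2 * j + 5, 2 * i + 2 * j + 6, by omega, fun t _ _ => ⟨?_, ?_⟩, funext fun p => ?_⟩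
  · grind [rightGap]
  · grind [rightGap]
  · grind [leftGap, rightGap, altColor]

theorem movesIn_leftGap (hj : j < i) :
    MovesIn 3 (altConfig (4 * i + 3)) (2 * j + 3) (leftGap i j) := by
  induction j with
  | zero =>
    exact ((MovesIn.refl.snoc (bergeMove_altConfig_firstStage hj)).snoc
      (bergeMove_firstStage_secondStage hj)).snoc (bergeMove_secondStage_leftGap hj)
  | succ j ih =>
    exact ((ih (by omega)).snoc (bergeMove_leftGap_rightGap (by omega))).snoc
      (mod_cast bergeMove_rightGap_leftGap hj)

theorem rightGap_eq_splitBlock (i : ℕ) :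
    rightGap (i + 1) i = splitBlock (4 * (i + 1) + 3) 1 (2 * (i + 1) + 2) true := by
  funext p
  grind [rightGap, splitBlock, altColor]

theorem sortsIn_four_mul_add_three (hi : 1 ≤ i) : SortsIn 3 (4 * i + 3) (2 * i + 2) := by
  obtain ⟨i, rfl⟩ := Nat.exists_eq_add_of_le' hi
  obtain ⟨f, h₀, hf, hs⟩ := ((movesIn_leftGap (lt_add_one i)).snoc
    (bergeMove_leftGap_rightGap (lt_add_one i))).exists_seq
  refine ⟨f, h₀, hf, isSorted_iff.2 ⟨1, true, hs.trans ?_⟩⟩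
  convert rightGap_eq_splitBlock i using 2 <;> push_cast <;> omega

end UpperBound

theorem h_three_moves_three_mod_four (n : ℕ) (hn : 7 ≤ n) (hmod : n % 4 = 3) :
    IsLeast {m : ℕ | SortsIn 3 n m} ((n + 1) / 2) := by
  refine ⟨?_, fun m hm => SortsIn.half_le (by omega) hm⟩
  obtain ⟨i, rfl⟩ : ∃ i, n = 4 * i + 3 := ⟨n / 4, by omega⟩
  rw [show (4 * i + 3 + 1) / 2 = 2 * i + 2 by omega]
  exact sortsIn_four_mul_add_three (by omega)
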